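/- arXiv:1003.3040 — 10 statements merged into one kernel-verified Lean document; each statement's English description precedes it below -/
import Mathlib

section
/- Let R be a commutative ring that contains a regular element which is not a unit (i.e., R is not a total ring of quotients). Then R is coherent if and only if R is weakly coherent. -/
/-!
Only the passage from weak coherence to coherence needs an argument. Let `a` be a regular nonunit
and `I` a finitely generated ideal. Multiplication by `a` is injective, so `I ≅ aI` and
`R ≅ aR` as modules. Since `aI ≤ aR` are proper ideals, with `aI` finitely generated and `aR` free,
weak coherence makes `aI`, and hence `I`, finitely presented.
-/

def IsWeaklyCoherentRing (R : Type*) [CommRing R] : Prop :=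
  ∀ I J : Ideal R, I ≤ J → I ≠ ⊤ → J ≠ ⊤ → I.FG →
    Module.FinitePresentation R J → Module.FinitePresentation R I

def IsCoherentRing (R : Type*) [CommRing R] : Prop :=
  ∀ I : Ideal R, I.FG → Module.FinitePresentation R I

theorem coherent_iff_weaklyCoherent_of_regular_nonunit (R : Type*) [CommRing R]
    (h : ∃ a : R, a ∈ nonZeroDivisors R ∧ ¬ IsUnit a) :
    IsCoherentRing R ↔ IsWeaklyCoherentRing R := by
  refine ⟨fun hc I _ _ _ _ hI _ => hc I hI, fun hw I hI => ?_⟩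
  obtain ⟨a, ha, hu⟩ := h
  let f : R →ₗ[R] R := LinearMap.mulLeft R a
  have hf : Function.Injective f := fun x y hxy =>
    (mul_cancel_left_mem_nonZeroDivisors ha).mp hxy
  have hle : Submodule.map f I ≤ Submodule.map f ⊤ := Submodule.map_mono le_top
  have hJ : Submodule.map f ⊤ ≠ ⊤ := by
    intro htop
    have h1 : (1 : R) ∈ Submodule.map f ⊤ := by rw [htop]; exact Submodule.mem_top
    obtain ⟨b, -, hb⟩ := h1
    exact hu (IsUnit.of_mul_eq_one b hb)
  have hI' : Submodule.map f I ≠ ⊤ := ne_top_of_le_ne_top hJ hle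
  have hJfp : Module.FinitePresentation R (Submodule.map f ⊤) :=
    .of_equiv (Submodule.topEquiv.symm.trans (Submodule.equivMapOfInjective f hf ⊤))
  have := hw (Submodule.map f I) (Submodule.map f ⊤) hle hI' hJ (Submodule.FG.map f hI) hJfp
  exact .of_equiv (Submodule.equivMapOfInjective f hf I).symm
end

section
/- If R is a weakly coherent commutative ring that is not coherent, then R is a total ring of quotients; that is, every non-zerodivisor of R is a unit. -/
theorem weaklyCoherent_not_coherent_totalRingOfQuotients (R : Type*) [CommRing R]
    (hwc : IsWeaklyCoherentRing R) (hnc : ¬ IsCoherentRing R) :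
    ∀ a : R, a ∈ nonZeroDivisors R → IsUnit a := by
  intro a ha
  by_contra hu
  apply hnc
  intro I hI
  let f : R →ₗ[R] R := LinearMap.mulLeft R a
  have hf : Function.Injective f := fun x y hxy =>
    (mul_cancel_left_mem_nonZeroDivisors ha).1 hxy
  let aI : Ideal R := Submodule.map f I
  let aR : Ideal R := Submodule.map f ⊤
  have hle : aI ≤ aR := Submodule.map_mono le_top
  have hJ : aR ≠ ⊤ := by
    intro h
    obtain ⟨x, -, hx⟩ : (1 : R) ∈ aR := h ▸ Submodule.mem_top
    exact hu (IsUnit.of_mul_eq_one x hx)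
  have hfpJ : Module.FinitePresentation R aR :=
    Module.FinitePresentation.of_equiv
      (Submodule.topEquiv.symm.trans (Submodule.equivMapOfInjective f hf ⊤))
  have hfpI : Module.FinitePresentation R aI :=
    hwc aI aR hle (fun h => hJ (top_le_iff.1 (h ▸ hle))) hJ (Submodule.FG.map f hI) hfpJ
  exact Module.FinitePresentation.of_equiv (Submodule.equivMapOfInjective f hf I).symm
end

section
/- Let R be a commutative ring, I a finitely generated ideal of R, and L an ideal of R with I ⊆ L. If L is finitely presented as an R-module, then the ideal L/I of R/I is finitely presented as an (R/I)-module. -/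
/-!
Reduction modulo `I` restricts to an `R`-linear surjection from `L` onto its image `L/I` in `R/I`,
whose kernel is `I`, a finitely generated module; hence `L/I` is finitely presented over `R`
(`Module.finitePresentation_of_surjective`). Finite presentation passes from `R` to the module-finite
`R`-algebra `R/I` (`finitePresentation_of_restrictScalars`): in a presentation `(R/I)^n → L/I`, the
kernel is already finitely generated over `R`.
-/

/-- Only finiteness of `A` over `R` is needed: it makes `A^n` a finite `R`-module, so the kernel of an
`A`-linear surjection `A^n → N` is finitely generated over `R`, and a fortiori over `A`. -/
theorem finitePresentation_of_restrictScalars (R A N : Type*) [CommRing R] [CommRing A]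
    [Algebra R A] [Module.Finite R A] [AddCommGroup N] [Module R N] [Module A N]
    [IsScalarTower R A N] [Module.FinitePresentation R N] :
    Module.FinitePresentation A N := by
  have : Module.Finite A N := Module.Finite.of_restrictScalars_finite R A N
  obtain ⟨n, f, hf⟩ := Module.Finite.exists_fin' A N
  refine Module.finitePresentation_of_surjective f hf ?_
  have hR : (LinearMap.ker (f.restrictScalars R)).FG :=
    Module.FinitePresentation.fg_ker (f.restrictScalars R) hf
  rw [LinearMap.ker_restrictScalars] at hR
  exact Submodule.FG.of_restrictScalars R hR

theorem quotient_finitePresentation_of_finitePresentation (R : Type*) [CommRing R]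
    (I L : Ideal R) (hI : I.FG) (hIL : I ≤ L)
    (h : Module.FinitePresentation R L) :
    Module.FinitePresentation (R ⧸ I) (L.map (Ideal.Quotient.mk I)) := by
  let g : L →ₗ[R] L.map (Ideal.Quotient.mk I) :=
    LinearMap.codRestrict ((L.map (Ideal.Quotient.mk I)).restrictScalars R)
      ((Ideal.Quotient.mkₐ R I).toLinearMap ∘ₗ L.subtype)
      (fun x => Ideal.mem_map_of_mem _ x.2)
  have hg : Function.Surjective g := by
    rintro ⟨y, hy⟩
    obtain ⟨x, hx, rfl⟩ :=
      (Ideal.mem_map_iff_of_surjective _ Ideal.Quotient.mk_surjective).1 hy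
    exact ⟨⟨x, hx⟩, rfl⟩
  have hker : LinearMap.ker g = Submodule.comap L.subtype I := by
    ext x
    rw [LinearMap.mem_ker, Submodule.mem_comap, ← Subtype.coe_inj]
    exact Ideal.Quotient.eq_zero_iff_mem
  have hfg : (LinearMap.ker g).FG := by
    rw [hker]
    refine Submodule.fg_of_fg_map_injective L.subtype L.injective_subtype ?_
    rwa [Submodule.map_comap_subtype, inf_eq_right.2 hIL]
  have : Module.FinitePresentation R (L.map (Ideal.Quotient.mk I)) :=
    Module.finitePresentation_of_surjective g hg hfg
  exact finitePresentation_of_restrictScalars R (R ⧸ I) _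
end

section
/- Let (A, M) be a commutative local ring with maximal ideal M, let E be an A-module with ME = 0 (so E is an A/M-vector space), and let R := A ⋉ E be the trivial ring extension of A by E. Then R is weakly coherent if and only if either (1) E is not finitely generated as an A-module (i.e., E has infinite rank over A/M), or (2) E is finitely generated as an A-module and A is weakly coherent. -/
/-! ### Finitely presented modules -/

/-- A nonzero finitely generated module is generated by a finite set `t` together with one element
outside the span of `t`, hence has a nonzero cyclic quotient by a finitely generated submodule. -/
theorem exists_notMem_span_insert {R X : Type*} [Ring R] [AddCommGroup X] [Module R X]
    [Nontrivial X] (s : Finset X) (hs : Submodule.span R (s : Set X) = ⊤) :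
    ∃ (x : X) (t : Finset X), x ∉ Submodule.span R (t : Set X) ∧
      Submodule.span R (insert x (t : Set X)) = ⊤ := by
  classical
  induction s using Finset.induction_on with
  | empty => simp at hs
  | insert a s _ ih =>
    rw [Finset.coe_insert] at hs
    by_cases h : a ∈ Submodule.span R (s : Set X)
    · exact ih (by rwa [Submodule.span_insert_eq_span h] at hs)
    · exact ⟨a, s, h, hs⟩

theorem Module.FinitePresentation.of_retract {R P N : Type*} [CommRing R] [AddCommGroup P]
    [Module R P] [AddCommGroup N] [Module R N] (i : P →ₗ[R] N) (p : N →ₗ[R] P)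
    (h : ∀ x, p (i x) = x) (hN : Module.FinitePresentation R N) :
    Module.FinitePresentation R P := by
  refine Module.finitePresentation_of_surjective p (fun x => ⟨i x, h x⟩) ?_
  -- The kernel of `p` is the image of the complementary idempotent `1 - i ∘ p`.
  have hker : LinearMap.ker p = LinearMap.range (LinearMap.id - i ∘ₗ p) := by
    ext x
    constructor
    · intro hx
      exact ⟨x, by simp [LinearMap.mem_ker.mp hx]⟩
    · rintro ⟨y, rfl⟩
      simp [h]
  rw [hker]
  exact Module.Finite.iff_fg.mp inferInstance

/-- Finite presentation descends along a surjection `R → S`: an `S`-module is its own base change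
from `R`. -/
theorem Module.FinitePresentation.of_surjective_algebraMap {R S X : Type*} [CommRing R]
    [CommRing S] [Algebra R S] [AddCommGroup X] [Module R X] [Module S X] [IsScalarTower R S X]
    (hS : Function.Surjective (algebraMap R S)) (hX : Module.FinitePresentation R X) :
    Module.FinitePresentation S X := by
  refine FinitePresentation.of_isBaseChange (R := R) (LinearMap.id : X →ₗ[R] X) ?_
  refine IsBaseChange.of_lift_unique _ fun Q _ _ _ _ g => ?_
  refine ⟨{ g with map_smul' := fun r x ↦ by obtain ⟨r, rfl⟩ := hS r; simp }, ?_, ?_⟩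
  · ext x; rfl
  · intro g' hg'
    ext x
    exact DFunLike.congr_fun hg' x

/-- `E` is a vector space over `A ⧸ M`, so every submodule is a direct summand. -/
theorem Submodule.exists_retraction_of_isMaximal {A E : Type*} [CommRing A] [AddCommGroup E]
    [Module A E] (M : Ideal A) [hM : M.IsMaximal] (hME : ∀ a ∈ M, ∀ e : E, a • e = 0)
    (W : Submodule A E) : ∃ p : E →ₗ[A] W, ∀ w : W, p w = w := by
  have tE : Module.IsTorsionBySet A E M := fun e a => hME a a.2 e
  have tW : Module.IsTorsionBySet A W M := fun e a => Subtype.ext (hME a a.2 e)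
  let := Ideal.Quotient.field M
  let : Module (A ⧸ M) E := tE.module
  let : Module (A ⧸ M) W := tW.module
  have : IsScalarTower A (A ⧸ M) E := tE.isScalarTower
  have : IsScalarTower A (A ⧸ M) W := tW.isScalarTower
  let f : W →ₗ[A ⧸ M] E :=
    LinearMap.extendScalarsOfSurjectiveEquiv (Ideal.Quotient.mk_surjective (I := M)) W.subtype
  obtain ⟨g, hg⟩ := f.exists_leftInverse_of_injective
    (LinearMap.ker_eq_bot.mpr Subtype.val_injective)
  exact ⟨g.restrictScalars A, fun w => DFunLike.congr_fun hg w⟩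

/-! ### Proper ideals as modules over the base -/

namespace TrivSqZeroExt

section

variable {A E : Type*} [CommRing A] [AddCommGroup E] [Module A E] [Module Aᵐᵒᵖ E]
  [IsCentralScalar A E]

theorem fst_mem_maximalIdeal [IsLocalRing A] {J : Ideal (TrivSqZeroExt A E)} (hJ : J ≠ ⊤)
    {x : TrivSqZeroExt A E} (hx : x ∈ J) : x.fst ∈ IsLocalRing.maximalIdeal A := by
  rw [IsLocalRing.mem_maximalIdeal, mem_nonunits_iff, ← isUnit_iff_isUnit_fst]
  exact fun h => hJ (J.eq_top_of_isUnit_mem hx h)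

/-- If `x.fst` kills `E`, multiplication by `r` on `x` only depends on `r.fst`. -/
theorem mul_eq_fst_smul {x : TrivSqZeroExt A E} (hx : ∀ e : E, x.fst • e = 0)
    (r : TrivSqZeroExt A E) : r * x = r.fst • x := by
  ext
  · simp
  · simp [hx]

section

attribute [local instance] algebraBase

/-- If `E` is finite, then `A` is the quotient of `A ⋉ E` by the finitely generated ideal `0 ⋉ E`. -/
theorem finitePresentation_base (hE : Module.Finite A E) :
    Module.FinitePresentation (TrivSqZeroExt A E) A := by
  refine Module.finitePresentation_of_surjective
    (Algebra.linearMap (TrivSqZeroExt A E) A) (fun a => ⟨inl a, rfl⟩) ?_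
  have hker : (LinearMap.ker (Algebra.linearMap (TrivSqZeroExt A E) A)).restrictScalars A =
      LinearMap.range (inrHom A E) := by
    ext x
    constructor
    · intro hx
      have hx' : x.fst = 0 := hx
      exact ⟨x.snd, by ext <;> simp [hx']⟩
    · rintro ⟨e, rfl⟩
      exact fst_inr A e
  refine Submodule.FG.of_restrictScalars A ?_
  rw [hker]
  exact Module.Finite.iff_fg.mp inferInstance

/-- An ideal whose first components kill `E` is annihilated by the kernel of the projection to
`A`, so that its two module structures form a tower. -/
theorem isScalarTower_ideal {J : Ideal (TrivSqZeroExt A E)}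
    (hJ : ∀ x ∈ J, ∀ e : E, x.fst • e = 0) : IsScalarTower (TrivSqZeroExt A E) A J where
  smul_assoc r a x := by
    apply Subtype.ext
    change (r.fst * a) • x.1 = r * (a • x.1)
    rw [mul_smul, mul_eq_fst_smul]
    intro e
    simp [mul_smul, hJ x.1 x.2 e]

theorem finitePresentation_iff_base (hE : Module.Finite A E) {J : Ideal (TrivSqZeroExt A E)}
    (hJ : ∀ x ∈ J, ∀ e : E, x.fst • e = 0) :
    Module.FinitePresentation (TrivSqZeroExt A E) J ↔ Module.FinitePresentation A J := by
  have := isScalarTower_ideal hJ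
  constructor
  · exact Module.FinitePresentation.of_surjective_algebraMap fun a => ⟨inl a, rfl⟩
  · intro h
    have := finitePresentation_base hE
    exact Module.FinitePresentation.trans (R := TrivSqZeroExt A E) (M := J) A

theorem finite_iff_base {J : Ideal (TrivSqZeroExt A E)}
    (hJ : ∀ x ∈ J, ∀ e : E, x.fst • e = 0) :
    Module.Finite (TrivSqZeroExt A E) J ↔ Module.Finite A J := by
  have := isScalarTower_ideal hJ
  constructor
  · intro h
    exact Module.Finite.of_restrictScalars_finite (TrivSqZeroExt A E) A J
  · intro h
    exact Module.Finite.of_restrictScalars_finite A (TrivSqZeroExt A E) J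

/-! ### Infinite-dimensional `E` -/

/-- A nonzero finitely presented proper ideal of `A ⋉ E` forces `E` to be finite. Such an ideal has
a quotient by a finitely generated submodule which is nonzero and cyclic; the annihilator of this
quotient is finitely generated, is proper, and contains `0 ⋉ E`, so that it projects linearly
onto `E`. -/
theorem finite_of_finitePresentation [IsLocalRing A]
    (hME : ∀ a ∈ IsLocalRing.maximalIdeal A, ∀ e : E, a • e = 0)
    {J : Ideal (TrivSqZeroExt A E)} (hJ : J ≠ ⊤) (hJ0 : J ≠ ⊥)
    (hfp : Module.FinitePresentation (TrivSqZeroExt A E) J) : Module.Finite A E := by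
  have : Nontrivial J := Submodule.nontrivial_iff_ne_bot.mpr hJ0
  obtain ⟨s, hs⟩ := (Module.Finite.fg_top : (⊤ : Submodule (TrivSqZeroExt A E) J).FG)
  obtain ⟨x, t, hxt, hspan⟩ := exists_notMem_span_insert s hs
  set T := Submodule.span (TrivSqZeroExt A E) (t : Set J) with hT
  have : Module.FinitePresentation (TrivSqZeroExt A E) (J ⧸ T) :=
    Module.finitePresentation_of_surjective T.mkQ T.mkQ_surjective
      (by rw [Submodule.ker_mkQ]; exact ⟨t, rfl⟩)
  let f := LinearMap.toSpanSingleton (TrivSqZeroExt A E) (J ⧸ T) (T.mkQ x)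
  have hf : Function.Surjective f := by
    intro q
    obtain ⟨y, rfl⟩ := T.mkQ_surjective q
    have hy : y ∈ Submodule.span (TrivSqZeroExt A E) (insert x (t : Set J)) := by
      rw [hspan]; trivial
    obtain ⟨r, z, hz, rfl⟩ := Submodule.mem_span_insert.mp hy
    refine ⟨r, ?_⟩
    have hz' : T.mkQ z = 0 := by simpa using hz
    rw [map_add, hz', add_zero, map_smul]
    rfl
  have hfg := Module.FinitePresentation.fg_ker f hf
  have hmem : ∀ r, r ∈ LinearMap.ker f ↔ r • x ∈ T := by
    intro r
    rw [LinearMap.mem_ker, LinearMap.toSpanSingleton_apply, ← map_smul, ← LinearMap.mem_ker,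
      Submodule.ker_mkQ]
  have hne : LinearMap.ker f ≠ ⊤ := by
    intro h
    have h1 : (1 : TrivSqZeroExt A E) ∈ LinearMap.ker f := by rw [h]; trivial
    rw [hmem, one_smul] at h1
    exact hxt h1
  let : Module (TrivSqZeroExt A E) E := Module.compHom E (fstHom A A E).toRingHom
  have : IsScalarTower (TrivSqZeroExt A E) A E := ⟨fun r a e => mul_smul r.fst a e⟩
  -- The second projection is linear on a proper ideal, whose first components kill `E`.
  let g : LinearMap.ker f →ₗ[TrivSqZeroExt A E] E :=
    { toFun := fun r => r.1.snd
      map_add' := fun _ _ => rfl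
      map_smul' := fun r y => by
        change (r * y.1).snd = r.fst • y.1.snd
        rw [mul_eq_fst_smul (hME _ (fst_mem_maximalIdeal hne y.2)), snd_smul] }
  have hg : Function.Surjective g := by
    intro e
    refine ⟨⟨inr e, ?_⟩, rfl⟩
    have h0 : (inr e : TrivSqZeroExt A E) • x = 0 := by
      apply Subtype.ext
      change inr e * x.1 = 0
      rw [mul_eq_fst_smul (hME _ (fst_mem_maximalIdeal hJ x.2)), fst_inr, zero_smul]
    rw [hmem, h0]
    exact T.zero_mem
  have : Module.Finite (TrivSqZeroExt A E) (LinearMap.ker f) := Module.Finite.iff_fg.mpr hfg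
  have := Module.Finite.of_surjective g hg
  exact Module.Finite.of_restrictScalars_finite (TrivSqZeroExt A E) A E

end

/-! ### Descent of weak coherence to `A` -/

/-- The ideal `I ⋉ 0` of the trivial extension, for an ideal `I` of `A` which kills `E`. -/
def idealInl (I : Ideal A) (hI : ∀ a ∈ I, ∀ e : E, a • e = 0) : Ideal (TrivSqZeroExt A E) where
  carrier := {x | x.fst ∈ I ∧ x.snd = 0}
  zero_mem' := ⟨I.zero_mem, rfl⟩
  add_mem' := fun ha hb => ⟨I.add_mem ha.1 hb.1, by simp [ha.2, hb.2]⟩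
  smul_mem' := fun r x hx => by
    refine ⟨I.mul_mem_left r.fst hx.1, ?_⟩
    rw [smul_eq_mul, mul_eq_fst_smul (hI _ hx.1), snd_smul, hx.2, smul_zero]

/-- The identification of `I` with `I ⋉ 0` as `A`-modules. -/
def idealInlEquiv (I : Ideal A) (hI : ∀ a ∈ I, ∀ e : E, a • e = 0) : I ≃ₗ[A] idealInl I hI where
  toFun a := ⟨inl a.1, a.2, rfl⟩
  invFun x := ⟨x.1.fst, x.2.1⟩
  map_add' a b := Subtype.ext (inl_add E a.1 b.1)
  map_smul' r a := Subtype.ext (inl_smul E r a.1)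
  left_inv _ := rfl
  right_inv x := Subtype.ext (by ext; exacts [rfl, x.2.2.symm])

/-- The ideals `I ⋉ 0` embed the lattice of proper ideals of `A` into that of `A ⋉ E`, preserving
and reflecting finite presentation. -/
theorem isWeaklyCoherentRing_base [IsLocalRing A]
    (hME : ∀ a ∈ IsLocalRing.maximalIdeal A, ∀ e : E, a • e = 0) (hE : Module.Finite A E)
    (h : IsWeaklyCoherentRing (TrivSqZeroExt A E)) : IsWeaklyCoherentRing A := by
  intro I J hIJ hI hJ hIfg hJfp
  have kill : ∀ K : Ideal A, K ≠ ⊤ → ∀ a ∈ K, ∀ e : E, a • e = 0 := fun K hK a ha =>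
    hME a (IsLocalRing.le_maximalIdeal hK ha)
  have ne : ∀ (K : Ideal A) (hK : K ≠ ⊤), idealInl K (kill K hK) ≠ ⊤ := by
    intro K hK hK'
    have h1 : (1 : TrivSqZeroExt A E) ∈ idealInl K (kill K hK) := by rw [hK']; trivial
    exact hK ((Ideal.eq_top_iff_one K).mpr h1.1)
  have kill' : ∀ (K : Ideal A) (hK : K ≠ ⊤), ∀ x ∈ idealInl K (kill K hK), ∀ e : E,
      x.fst • e = 0 := fun K hK x hx => kill K hK _ hx.1
  have : Module.Finite A I := Module.Finite.iff_fg.mpr hIfg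
  have hfin := (finite_iff_base (kill' I hI)).mpr (Module.Finite.equiv (idealInlEquiv I (kill I hI)))
  have hfp := (finitePresentation_iff_base hE (kill' J hJ)).mpr
    (Module.FinitePresentation.of_equiv (idealInlEquiv J (kill J hJ)))
  have := h (idealInl I (kill I hI)) (idealInl J (kill J hJ)) (fun x hx => ⟨hIJ hx.1, hx.2⟩)
    (ne I hI) (ne J hJ) (Module.Finite.iff_fg.mp hfin) hfp
  rw [finitePresentation_iff_base hE (kill' I hI)] at this
  exact Module.FinitePresentation.of_equiv (idealInlEquiv I (kill I hI)).symm

/-! ### Ascent of weak coherence from `A` -/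

/-- The projection of an ideal `J` of the trivial extension to `A`, as an `A`-linear map. -/
def idealFst (J : Ideal (TrivSqZeroExt A E)) : J →ₗ[A] A where
  toFun x := x.1.fst
  map_add' _ _ := rfl
  map_smul' _ _ := rfl

/-- The subspace `{e | (0, e) ∈ J}` of `E`. -/
def idealInr (J : Ideal (TrivSqZeroExt A E)) : Submodule A E :=
  (J.restrictScalars A).comap (inrHom A E)

/-- The kernel of the projection `J → A` is `J ∩ (0 ⋉ E)`. -/
def idealInrEquiv (J : Ideal (TrivSqZeroExt A E)) :
    idealInr J ≃ₗ[A] LinearMap.ker (idealFst J) where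
  toFun e := ⟨⟨inr e.1, e.2⟩, fst_inr A e.1⟩
  invFun x := ⟨x.1.1.snd, by
    have h : inr x.1.1.snd = x.1.1 := by
      ext
      exacts [x.2.symm, rfl]
    change inr x.1.1.snd ∈ J
    rw [h]
    exact x.1.2⟩
  map_add' a b := Subtype.ext (Subtype.ext (inr_add A a.1 b.1))
  map_smul' r a := Subtype.ext (Subtype.ext (inr_smul A r a.1))
  left_inv _ := rfl
  right_inv x := Subtype.ext (Subtype.ext (by ext; exacts [x.2.symm, rfl]))

/-- A subspace `W` of `E` with `0 ⋉ W ⊆ J` is a direct summand of `J`: compose a retraction of `E`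
onto `W` with the second projection. -/
theorem finitePresentation_of_le_idealInr [IsLocalRing A]
    (hME : ∀ a ∈ IsLocalRing.maximalIdeal A, ∀ e : E, a • e = 0)
    {J : Ideal (TrivSqZeroExt A E)} (hJ : Module.FinitePresentation A J) {W : Submodule A E}
    (hW : W ≤ idealInr J) : Module.FinitePresentation A W := by
  obtain ⟨p, hp⟩ := Submodule.exists_retraction_of_isMaximal (IsLocalRing.maximalIdeal A) hME W
  let i : W →ₗ[A] J :=
    { toFun := fun w => ⟨inr w.1, hW w.2⟩
      map_add' := fun a b => Subtype.ext (inr_add A a.1 b.1)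
      map_smul' := fun r a => Subtype.ext (inr_smul A r a.1) }
  let q : J →ₗ[A] E :=
    { toFun := fun x => x.1.snd
      map_add' := fun _ _ => rfl
      map_smul' := fun _ _ => rfl }
  exact Module.FinitePresentation.of_retract i (p ∘ₗ q) hp hJ

/-- Ideals `I ≤ J` of `A ⋉ E` are extensions of their projections to `A` by their intersections with
`0 ⋉ E`. The projections are handled by weak coherence of `A`; the intersections are direct summands
of `J`. No finiteness of the maximal ideal is needed. -/
theorem isWeaklyCoherentRing_of_base [IsLocalRing A]
    (hME : ∀ a ∈ IsLocalRing.maximalIdeal A, ∀ e : E, a • e = 0) (hE : Module.Finite A E)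
    (h : IsWeaklyCoherentRing A) : IsWeaklyCoherentRing (TrivSqZeroExt A E) := by
  intro I J hIJ hI hJ hIfg hJfp
  have kill : ∀ K : Ideal (TrivSqZeroExt A E), K ≠ ⊤ → ∀ x ∈ K, ∀ e : E, x.fst • e = 0 :=
    fun K hK x hx => hME _ (fst_mem_maximalIdeal hK hx)
  have ne : ∀ K : Ideal (TrivSqZeroExt A E), K ≠ ⊤ → LinearMap.range (idealFst K) ≠ ⊤ := by
    intro K hK hK'
    have h1 : (1 : A) ∈ LinearMap.range (idealFst K) := by rw [hK']; trivial
    obtain ⟨x, hx⟩ := h1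
    have := fst_mem_maximalIdeal hK x.2
    rw [show x.1.fst = 1 from hx] at this
    exact (Ideal.ne_top_iff_one _).mp (IsLocalRing.maximalIdeal.isMaximal A).ne_top this
  have := (finite_iff_base (kill I hI)).mp (Module.Finite.iff_fg.mpr hIfg)
  rw [finitePresentation_iff_base hE (kill J hJ)] at hJfp
  rw [finitePresentation_iff_base hE (kill I hI)]
  have hJker : (LinearMap.ker (idealFst J).rangeRestrict).FG := by
    rw [LinearMap.ker_rangeRestrict]
    have := finitePresentation_of_le_idealInr hME hJfp (le_refl (idealInr J))
    exact Module.Finite.iff_fg.mp (Module.Finite.equiv (idealInrEquiv J))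
  have hJfst : Module.FinitePresentation A (LinearMap.range (idealFst J)) :=
    Module.finitePresentation_of_surjective _ (idealFst J).surjective_rangeRestrict hJker
  have : Module.FinitePresentation A (LinearMap.range (idealFst I)) := by
    refine h (LinearMap.range (idealFst I)) (LinearMap.range (idealFst J)) ?_ (ne I hI) (ne J hJ)
      (Module.Finite.iff_fg.mp inferInstance) hJfst
    rintro _ ⟨x, rfl⟩
    exact ⟨⟨x.1, hIJ x.2⟩, rfl⟩
  have : Module.FinitePresentation A (LinearMap.ker (idealFst I).rangeRestrict) := by
    rw [LinearMap.ker_rangeRestrict]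
    have : Module.FinitePresentation A (idealInr I) :=
      finitePresentation_of_le_idealInr hME hJfp fun e he => hIJ he
    exact Module.FinitePresentation.of_equiv (R := A) (M := idealInr I)
      (N := LinearMap.ker (idealFst I)) (idealInrEquiv I)
  exact Module.finitePresentation_of_ker _ (idealFst I).surjective_rangeRestrict

end

end TrivSqZeroExt

theorem trivSqZeroExt_weaklyCoherent_iff (A E : Type*) [CommRing A] [IsLocalRing A]
    [AddCommGroup E] [Module A E] [Module Aᵐᵒᵖ E] [IsCentralScalar A E]
    (hME : ∀ a ∈ IsLocalRing.maximalIdeal A, ∀ e : E, a • e = 0) :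
    IsWeaklyCoherentRing (TrivSqZeroExt A E) ↔
      (¬ Module.Finite A E) ∨ (Module.Finite A E ∧ IsWeaklyCoherentRing A) := by
  constructor
  · intro h
    by_cases hE : Module.Finite A E
    · exact Or.inr ⟨hE, TrivSqZeroExt.isWeaklyCoherentRing_base hME hE h⟩
    · exact Or.inl hE
  · rintro (hE | ⟨hE, h⟩)
    · intro I J hIJ _ hJ _ hJfp
      have hJ0 : J = ⊥ := by
        by_contra hJ0
        exact hE (TrivSqZeroExt.finite_of_finitePresentation hME hJ hJ0 hJfp)
      obtain rfl : I = ⊥ := le_bot_iff.mp (hJ0 ▸ hIJ)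
      infer_instance
    · exact TrivSqZeroExt.isWeaklyCoherentRing_of_base hME hE h
end

section
/- Let (A, M) be a commutative local ring with maximal ideal M, let E be an A-module with ME = 0 which is not finitely generated as an A-module (i.e., E is an A/M-vector space of infinite rank), and let R := A ⋉ E be the trivial ring extension of A by E. Then R is a weakly coherent ring. -/
/-- In any commutative ring, a linear relation among the members of an irredundant generating set
has no unit coefficient: otherwise the corresponding generator could be dropped. -/
theorem not_isUnit_of_sum_mul_eq_zero {R : Type*} [CommRing R] {J : Ideal R} {s : Finset R}
    (hs : Ideal.span (s : Set R) = J)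
    (hmin : ∀ u : Finset R, u < s → Ideal.span (u : Set R) ≠ J)
    (t : s → R) (ht : ∑ i, t i * (i : R) = 0) (x : s) : ¬ IsUnit (t x) := by
  classical
  intro hu
  have hlt : s.erase (x : R) < s := Finset.erase_ssubset x.2
  refine hmin _ hlt (le_antisymm (hs ▸ Ideal.span_mono (by exact_mod_cast hlt.le)) ?_)
  rw [← hs, Ideal.span_le]
  intro y hy
  by_cases hyx : y = x
  · subst hyx
    rw [SetLike.mem_coe, ← Ideal.unit_mul_mem_iff_mem _ hu]
    have hsplit := Finset.add_sum_erase Finset.univ (fun i : s => t i * (i : R))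
      (Finset.mem_univ x)
    rw [ht] at hsplit
    rw [eq_neg_of_add_eq_zero_left hsplit]
    refine neg_mem (sum_mem fun i hi => Ideal.mul_mem_left _ _ (Ideal.subset_span ?_))
    have hne : (i : R) ≠ x := fun h => (Finset.mem_erase.mp hi).1 (Subtype.ext h)
    simp [hne]
  · exact Ideal.subset_span (by simpa [hyx] using hy)

theorem eq_bot_of_finitePresentation_trivSqZeroExt {A E : Type*} [CommRing A] [IsLocalRing A]
    [AddCommGroup E] [Module A E] [Module Aᵐᵒᵖ E] [IsCentralScalar A E]
    (hME : ∀ a ∈ IsLocalRing.maximalIdeal A, ∀ e : E, a • e = 0)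
    (hE : ¬ Module.Finite A E) (J : Ideal (TrivSqZeroExt A E)) (hJ : J ≠ ⊤)
    [Module.FinitePresentation (TrivSqZeroExt A E) J] : J = ⊥ := by
  classical
  by_contra hJ0
  have hfst : ∀ r : TrivSqZeroExt A E, ¬ IsUnit r → r.fst ∈ IsLocalRing.maximalIdeal A := by
    intro r hr
    rw [IsLocalRing.mem_maximalIdeal, mem_nonunits_iff]
    rwa [TrivSqZeroExt.isUnit_iff_isUnit_fst] at hr
  have hfg : J.FG := (Module.Finite.iff_fg).mp inferInstance
  obtain ⟨s, hs, hmin⟩ := WellFounded.has_min (wellFounded_lt (α := Finset (TrivSqZeroExt A E)))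
    {s | Ideal.span (s : Set (TrivSqZeroExt A E)) = J} hfg
  have hs : Ideal.span (s : Set (TrivSqZeroExt A E)) = J := hs
  have hsJ : ∀ x ∈ s, x ∈ J := fun x hx => hs ▸ Ideal.subset_span hx
  obtain ⟨x, hx⟩ : s.Nonempty := by
    rw [Finset.nonempty_iff_ne_empty]
    rintro rfl
    exact hJ0 (by simpa using hs.symm)
  let f : (s → TrivSqZeroExt A E) →ₗ[TrivSqZeroExt A E] J :=
    Fintype.linearCombination (TrivSqZeroExt A E) fun i : s => (⟨i, hsJ i i.2⟩ : J)
  have hfval : ∀ t, (f t : TrivSqZeroExt A E) = ∑ i, t i * (i : TrivSqZeroExt A E) := by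
    intro t
    simp [f, Fintype.linearCombination_apply]
  have hf : Function.Surjective f := by
    rintro ⟨y, hy⟩
    rw [← hs, Ideal.span, ← Subtype.range_coe (s := (s : Set (TrivSqZeroExt A E))),
      Submodule.mem_span_range_iff_exists_fun] at hy
    obtain ⟨c, hc⟩ := hy
    exact ⟨c, Subtype.ext ((hfval c).trans hc)⟩
  have hker : ∀ t ∈ LinearMap.ker f, ∀ i, (t i).fst ∈ IsLocalRing.maximalIdeal A := by
    intro t ht i
    refine hfst _ (not_isUnit_of_sum_mul_eq_zero hs (fun u hlt hu => hmin u hu hlt) t ?_ i)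
    rw [← hfval, LinearMap.mem_ker.mp ht, ZeroMemClass.coe_zero]
  obtain ⟨T, hT⟩ := Module.FinitePresentation.fg_ker f hf
  refine hE ⟨⟨T.image fun t => (t ⟨x, hx⟩).snd, eq_top_iff.mpr fun e _ => ?_⟩⟩
  have hcomp : ∀ t ∈ LinearMap.ker f, (t ⟨x, hx⟩).snd ∈
      Submodule.span A (T.image fun t => (t ⟨x, hx⟩).snd : Finset E) := by
    intro t ht
    rw [← hT] at ht
    induction ht using Submodule.span_induction with
    | mem t ht =>
      exact Submodule.subset_span (Finset.mem_coe.mpr (Finset.mem_image_of_mem _ ht))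
    | zero => simp
    | add t u _ _ iht ihu => simpa using add_mem iht ihu
    | smul r t ht iht =>
      have h0 := hME _ (hker t (hT ▸ ht) ⟨x, hx⟩) r.snd
      simpa [h0] using Submodule.smul_mem _ r.fst iht
  have hxM : x.fst ∈ IsLocalRing.maximalIdeal A :=
    hfst x fun hu => hJ (Ideal.eq_top_of_isUnit_mem _ (hsJ x hx) hu)
  -- The element `(0, e)` kills the generator `x`, so it gives a relation supported at `x`.
  have hmem : Pi.single (⟨x, hx⟩ : s) (TrivSqZeroExt.inr e) ∈ LinearMap.ker f := by
    rw [LinearMap.mem_ker]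
    refine Subtype.ext ?_
    rw [hfval, Finset.sum_eq_single ⟨x, hx⟩ (by intro b _ hb; simp [hb]) (by simp)]
    ext <;> simp [hME _ hxM e]
  simpa using hcomp _ hmem

theorem weaklyCoherent_trivSqZeroExt_of_not_finite (A E : Type*) [CommRing A] [IsLocalRing A]
    [AddCommGroup E] [Module A E] [Module Aᵐᵒᵖ E] [IsCentralScalar A E]
    (hME : ∀ a ∈ IsLocalRing.maximalIdeal A, ∀ e : E, a • e = 0)
    (hE : ¬ Module.Finite A E) :
    IsWeaklyCoherentRing (TrivSqZeroExt A E) := by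
  intro I J hIJ _ hJ _ hJfp
  have hI : I = ⊥ := le_bot_iff.mp
    (hIJ.trans (eq_bot_of_finitePresentation_trivSqZeroExt hME hE J hJ).le)
  subst hI
  infer_instance
end

section
/- Let (A, M) be a commutative local ring with maximal ideal M, let E be an A-module with ME = 0 which is not finitely generated as an A-module (i.e., E is an A/M-vector space of infinite rank), and let R := A ⋉ E be the trivial ring extension of A by E. Then R has no nonzero proper ideal that is finitely presented as an R-module. -/
/-!
Write `R = A ⋉ E` and `𝔪` for the maximal ideal of `A`. Suppose `I` is a nonzero proper finitely
presented ideal of `R`. Choose an irredundant finite generating family of `I`, indexed by `s`, and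
let `K` be the kernel of the surjection `R ^ s → I`; it is finitely generated since `I` is finitely
presented. Irredundance forces every coordinate of an element of `K` to be a nonunit, that is, to
lie in `𝔪 ⋉ E`. As `𝔪 E = 0`, taking the `E`-component of a fixed coordinate is then a map
`K → E` which is semilinear along `R → A`. It is onto: `I` lies in `𝔪 ⋉ E`, which is annihilated
by `0 ⋉ E`, so `(0 ⋉ E) ^ s ⊆ K`. Hence `E` is finitely generated over `A`, a contradiction.
-/

/-- A finite module has a finite spanning set in which every linear relation has only nonunit
coefficients: any spanning set that is minimal for inclusion will do. -/
lemma exists_finset_span_eq_top_forall_not_isUnit (R N : Type*) [CommRing R] [AddCommGroup N]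
    [Module R N] [Module.Finite R N] :
    ∃ s : Finset N, Submodule.span R (s : Set N) = ⊤ ∧
      ∀ c : s → R, ∑ x, c x • (x : N) = 0 → ∀ x, ¬ IsUnit (c x) := by
  classical
  obtain ⟨s₀, hs₀⟩ := Module.Finite.fg_top (R := R) (M := N)
  obtain ⟨s, hs, hmin⟩ := WellFounded.has_min (wellFounded_lt (α := Finset N))
    {s | Submodule.span R (s : Set N) = ⊤} ⟨s₀, hs₀⟩
  refine ⟨s, hs, fun c hc x hx ↦ hmin (s.erase x) ?_ (Finset.erase_ssubset x.2)⟩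
  change Submodule.span R ((s.erase x : Finset N) : Set N) = ⊤
  have hmem : (x : N) ∈ Submodule.span R ((s.erase x : Finset N) : Set N) := by
    -- The relation expresses `c x • x`, hence `x`, through the other generators.
    rw [← Submodule.smul_mem_iff_of_isUnit _ hx]
    rw [← Finset.add_sum_erase _ _ (Finset.mem_univ x)] at hc
    rw [eq_neg_of_add_eq_zero_left hc]
    refine Submodule.neg_mem _ (Submodule.sum_mem _ fun y hy ↦ Submodule.smul_mem _ _ ?_)
    refine Submodule.subset_span ?_
    have hne : (y : N) ≠ x := fun h ↦ (Finset.mem_erase.1 hy).1 (Subtype.ext h)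
    exact Finset.mem_coe.2 (Finset.mem_erase.2 ⟨hne, y.2⟩)
  rw [eq_top_iff, ← hs, Submodule.span_le]
  intro y hy
  by_cases h : y = x
  · rw [h]; exact hmem
  · exact Submodule.subset_span (Finset.mem_coe.2 (Finset.mem_erase.2 ⟨h, hy⟩))

theorem trivSqZeroExt_no_finitePresentation_proper_ideal (A E : Type*) [CommRing A]
    [IsLocalRing A] [AddCommGroup E] [Module A E] [Module Aᵐᵒᵖ E] [IsCentralScalar A E]
    (hME : ∀ a ∈ IsLocalRing.maximalIdeal A, ∀ e : E, a • e = 0)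
    (hE : ¬ Module.Finite A E) :
    ∀ I : Ideal (TrivSqZeroExt A E), I ≠ ⊥ → I ≠ ⊤ →
      ¬ Module.FinitePresentation (TrivSqZeroExt A E) I := by
  classical
  intro I hbot htop hfp
  apply hE
  have hkill : ∀ r : TrivSqZeroExt A E, ¬ IsUnit r → ∀ e : E, r.fst • e = 0 := fun r hr ↦
    hME _ ((IsLocalRing.mem_maximalIdeal _).2 fun h ↦
      hr (TrivSqZeroExt.isUnit_iff_isUnit_fst.2 h))
  obtain ⟨s, hs, hrel⟩ :=
    exists_finset_span_eq_top_forall_not_isUnit (TrivSqZeroExt A E) I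
  obtain ⟨x₀⟩ : Nonempty s := by
    by_contra hne
    rw [Finset.nonempty_coe_sort, Finset.not_nonempty_iff_eq_empty] at hne
    rw [hne, Finset.coe_empty, Submodule.span_empty] at hs
    refine hbot ((Submodule.eq_bot_iff _).2 fun x hx ↦ ?_)
    have : (⟨x, hx⟩ : I) ∈ (⊥ : Submodule (TrivSqZeroExt A E) I) := hs ▸ Submodule.mem_top
    simpa using this
  let l : (s → TrivSqZeroExt A E) →ₗ[TrivSqZeroExt A E] I :=
    Fintype.linearCombination (TrivSqZeroExt A E) (fun x : s ↦ (x : I))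
  have hl : Function.Surjective l := by
    rw [← LinearMap.range_eq_top, Fintype.range_linearCombination, Subtype.range_coe_subtype]
    exact hs
  have hK : ∀ v ∈ LinearMap.ker l, ∀ x, ¬ IsUnit (v x) := fun v hv ↦
    hrel v (by simpa [l, Fintype.linearCombination_apply] using hv)
  obtain ⟨t, ht⟩ := Module.FinitePresentation.fg_ker l hl
  have hsnd : ∀ v ∈ Submodule.span (TrivSqZeroExt A E) (t : Set (s → TrivSqZeroExt A E)),
      (v x₀).snd ∈ Submodule.span A ((t.image fun v ↦ (v x₀).snd : Finset E) : Set E) := by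
    intro v hv
    induction hv using Submodule.span_induction with
    | mem v hv => exact Submodule.subset_span (by simpa using ⟨v, hv, rfl⟩)
    | zero => simp
    | add v w _ _ hv hw => simpa using Submodule.add_mem _ hv hw
    | smul r v hv ih =>
      have h0 := hkill _ (hK v (ht ▸ hv) x₀) r.snd
      simpa [h0] using Submodule.smul_mem _ r.fst ih
  refine ⟨⟨t.image fun v ↦ (v x₀).snd, eq_top_iff.2 fun e _ ↦ ?_⟩⟩
  have hmem : Pi.single x₀ (TrivSqZeroExt.inr e) ∈ LinearMap.ker l := by
    have h0 := hkill ((x₀ : I) : TrivSqZeroExt A E)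
      (fun hu ↦ htop (Ideal.eq_top_of_isUnit_mem _ (x₀ : I).2 hu)) e
    rw [LinearMap.mem_ker]
    apply Subtype.ext
    simp only [l, Fintype.linearCombination_apply_single]
    ext <;> simp [h0]
  rw [← ht] at hmem
  simpa using hsnd _ hmem
end

section
/- Let (A, M) be a commutative local ring with maximal ideal M, let E be a nonzero A-module with ME = 0 which is not finitely generated as an A-module (i.e., E is an A/M-vector space of infinite rank), and let R := A ⋉ E be the trivial ring extension of A by E. Then R is not a coherent ring. -/
/-- If the first components of the elements of an ideal `J` of `A ⋉ E` kill `E`, then the second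
projection `J → E` is semilinear along `fst : A ⋉ E → A`. -/
def TrivSqZeroExt.sndOfKills {A E : Type*} [CommRing A] [AddCommGroup E] [Module A E]
    [Module Aᵐᵒᵖ E] [IsCentralScalar A E] (J : Ideal (TrivSqZeroExt A E))
    (hJ : ∀ x ∈ J, ∀ e : E, x.fst • e = 0) :
    J →ₛₗ[((TrivSqZeroExt.fstHom A A E : TrivSqZeroExt A E →ₐ[A] A) :
      TrivSqZeroExt A E →+* A)] E where
  toFun x := x.1.snd
  map_add' x y := by simp
  map_smul' r x := by
    simp [TrivSqZeroExt.snd_mul, hJ x.1 x.2]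

theorem trivSqZeroExt_not_coherent_of_not_finite (A E : Type*) [CommRing A]
    [IsLocalRing A] [AddCommGroup E] [Module A E] [Module Aᵐᵒᵖ E] [IsCentralScalar A E]
    [Nontrivial E]
    (hME : ∀ a ∈ IsLocalRing.maximalIdeal A, ∀ e : E, a • e = 0)
    (hE : ¬ Module.Finite A E) :
    ¬ IsCoherentRing (TrivSqZeroExt A E) := by
  intro hcoh
  obtain ⟨e, he⟩ := exists_ne (0 : E)
  let φ : TrivSqZeroExt A E →ₗ[TrivSqZeroExt A E] TrivSqZeroExt A E :=
    LinearMap.toSpanSingleton _ _ (TrivSqZeroExt.inr e)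
  have hφ (x : TrivSqZeroExt A E) : x ∈ LinearMap.ker φ ↔ x.fst • e = 0 := by
    simp [φ, TrivSqZeroExt.ext_iff, LinearMap.toSpanSingleton_apply]
  have hfp : Module.FinitePresentation (TrivSqZeroExt A E) (LinearMap.range φ) :=
    hcoh _ (by rw [LinearMap.range_eq_map]; exact Module.Finite.fg_top.map φ)
  have hfg : (LinearMap.ker φ).FG := by
    rw [← LinearMap.ker_rangeRestrict]
    exact Module.FinitePresentation.fg_ker _ φ.surjective_rangeRestrict
  have hfin : Module.Finite (TrivSqZeroExt A E) (LinearMap.ker φ) := Module.Finite.of_fg hfg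
  -- A unit cannot kill `e ≠ 0`, so first components of the kernel lie in the maximal ideal.
  have hkill : ∀ x ∈ LinearMap.ker φ, ∀ f : E, x.fst • f = 0 := fun x hx =>
    hME _ <| (IsLocalRing.mem_maximalIdeal _).2 fun hu => he <|
      hu.smul_eq_zero.1 ((hφ x).1 hx)
  have : RingHomSurjective ((TrivSqZeroExt.fstHom A A E : TrivSqZeroExt A E →ₐ[A] A) :
      TrivSqZeroExt A E →+* A) := ⟨TrivSqZeroExt.fst_surjective⟩
  exact hE <| Module.Finite.of_surjective (TrivSqZeroExt.sndOfKills _ hkill) fun f =>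
    ⟨⟨TrivSqZeroExt.inr f, (hφ _).2 (by simp)⟩, TrivSqZeroExt.snd_inr A f⟩
end

section
/- Let (A, M) be a commutative local ring whose maximal ideal M is not finitely generated, and let E be a nonzero A-module with ME = 0. Then the trivial ring extension R := A ⋉ E is not a coherent ring. -/
theorem trivSqZeroExt_not_coherent_of_maximalIdeal_not_fg (A E : Type*) [CommRing A]
    [IsLocalRing A] [AddCommGroup E] [Module A E] [Module Aᵐᵒᵖ E] [IsCentralScalar A E]
    [Nontrivial E]
    (hM : ¬ (IsLocalRing.maximalIdeal A).FG)
    (hME : ∀ a ∈ IsLocalRing.maximalIdeal A, ∀ e : E, a • e = 0) :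
    ¬ IsCoherentRing (TrivSqZeroExt A E) := by
  intro h
  obtain ⟨e, he⟩ := exists_ne (0 : E)
  let x : TrivSqZeroExt A E := TrivSqZeroExt.inr e
  have hfp : Module.FinitePresentation (TrivSqZeroExt A E)
      (Submodule.span (TrivSqZeroExt A E) {x}) :=
    h (Ideal.span {x}) ⟨{x}, by simp⟩
  let f := (LinearMap.toSpanSingleton (TrivSqZeroExt A E) (TrivSqZeroExt A E) x).codRestrict
    (Submodule.span (TrivSqZeroExt A E) {x})
    (fun r => Submodule.smul_mem _ r (Submodule.mem_span_singleton_self x))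
  have hf : Function.Surjective f := by
    rintro ⟨y, hy⟩
    obtain ⟨r, hr⟩ := Submodule.mem_span_singleton.1 hy
    exact ⟨r, Subtype.ext hr⟩
  have hker : (LinearMap.ker f).FG := Module.FinitePresentation.fg_ker f hf
  let φ : TrivSqZeroExt A E →+* A := (TrivSqZeroExt.fstHom A A E).toRingHom
  have hφ : Function.Surjective φ := fun a => ⟨TrivSqZeroExt.inl a, rfl⟩
  have hk : LinearMap.ker f = (IsLocalRing.maximalIdeal A).comap φ := by
    ext r
    have h1 : r ∈ LinearMap.ker f ↔ r.fst • e = 0 := by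
      rw [LinearMap.mem_ker, ← Subtype.val_inj]
      change r * TrivSqZeroExt.inr e = 0 ↔ _
      rw [TrivSqZeroExt.ext_iff]
      simp
    rw [h1, Ideal.mem_comap]
    change _ ↔ r.fst ∈ IsLocalRing.maximalIdeal A
    refine ⟨fun h0 => ?_, fun hr => hME _ hr e⟩
    rw [IsLocalRing.mem_maximalIdeal, mem_nonunits_iff]
    exact fun hu => he (hu.smul_eq_zero.1 h0)
  rw [hk] at hker
  apply hM
  rw [← Ideal.map_comap_of_surjective φ hφ (IsLocalRing.maximalIdeal A)]
  exact Ideal.FG.map hker φ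
end

section
/- Let (A, M) be a commutative local ring with maximal ideal M, let E be an A-module with ME = 0 which is finitely generated as an A-module, and let R := A ⋉ E be the trivial ring extension of A by E. If J is an ideal of A with J ⊆ M that is finitely presented as an A-module, then the ideal J ⋉ 0 := {(a, 0) : a ∈ J} of R is finitely presented as an R-module. -/
/-!
Write `R = A ⋉ E`. A finite presentation of `J` gives `a : Fin n → J` generating `J` whose syzygy
module `L ≤ Aⁿ` is finitely generated. The elements `(aᵢ, 0)` generate `J ⋉ 0` over `R`, and
`r ∈ Rⁿ` is a syzygy of them iff `∑ (rᵢ).fst aᵢ = 0` and `∑ aᵢ • (rᵢ).snd = 0`. The second equation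
always holds, because `aᵢ ∈ M` and `ME = 0`; in the proof this is read off from the fact that
`J ⋉ 0` is closed under multiplication by `R`, which already forces `JE = 0`. Hence the syzygy module over `R` is, as an `A`-module,
a copy of `L × Eⁿ`; it is finitely generated over `A`, a fortiori over `R`.
-/

open TrivSqZeroExt in
theorem trivSqZeroExt_inl_ideal_finitePresentation (A E : Type*) [CommRing A]
    [IsLocalRing A] [AddCommGroup E] [Module A E] [Module Aᵐᵒᵖ E] [IsCentralScalar A E]
    (hME : ∀ a ∈ IsLocalRing.maximalIdeal A, ∀ e : E, a • e = 0)
    (hE : Module.Finite A E)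
    (J : Ideal A) (hJM : J ≤ IsLocalRing.maximalIdeal A)
    (hJ : Module.FinitePresentation A J)
    (K : Ideal (TrivSqZeroExt A E))
    (hK : ∀ x : TrivSqZeroExt A E, x ∈ K ↔ x.fst ∈ J ∧ x.snd = 0) :
    Module.FinitePresentation (TrivSqZeroExt A E) K := by
  obtain ⟨n, f, hf⟩ := Module.Finite.exists_fin' A J
  have hL : (LinearMap.ker f).FG := Module.FinitePresentation.fg_ker f hf
  have hf_apply (v : Fin n → A) :
      (f v : A) = ∑ i, v i * (f (Pi.single i 1) : A) := by
    conv_lhs => rw [pi_eq_sum_univ' v]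
    simp [map_sum]
  let b (i : Fin n) : K := ⟨inl (f (Pi.single i 1) : A), (hK _).2 (by simp)⟩
  let g := Fintype.linearCombination (TrivSqZeroExt A E) b
  have hg_fst (r : Fin n → TrivSqZeroExt A E) :
      (g r : TrivSqZeroExt A E).fst = f (fun i => (r i).fst) := by
    rw [hf_apply]
    simp [g, b, Fintype.linearCombination_apply, fst_sum]
  have hg_snd (r : Fin n → TrivSqZeroExt A E) : (g r : TrivSqZeroExt A E).snd = 0 :=
    ((hK _).1 (g r).2).2
  have hg_surj : Function.Surjective g := by
    rintro ⟨x, hx⟩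
    obtain ⟨hx1, hx2⟩ := (hK x).1 hx
    obtain ⟨v, hv⟩ := hf ⟨x.fst, hx1⟩
    refine ⟨fun i => inl (v i), Subtype.ext (TrivSqZeroExt.ext ?_ ?_)⟩
    · rw [hg_fst]
      simp [hv]
    · rw [hg_snd, hx2]
  refine Module.finitePresentation_of_surjective g hg_surj ?_
  -- The `A`-linear map `(v, e) ↦ (vᵢ, eᵢ)ᵢ` identifies `L × Eⁿ` with the kernel of `g`.
  let φ : (Fin n → A) × (Fin n → E) →ₗ[A] (Fin n → TrivSqZeroExt A E) :=
    { toFun := fun p i => inl (p.1 i) + inr (p.2 i)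
      map_add' := fun p q => by ext i <;> simp
      map_smul' := fun c p => by ext i <;> simp }
  have hker : ((LinearMap.ker g).restrictScalars A) =
      ((LinearMap.ker f).prod (⊤ : Submodule A (Fin n → E))).map φ := by
    ext r
    simp only [Submodule.restrictScalars_mem, LinearMap.mem_ker, Submodule.mem_map,
      Submodule.mem_prod, Submodule.mem_top, and_true]
    constructor
    · intro hr
      refine ⟨(fun i => (r i).fst, fun i => (r i).snd), Subtype.ext ?_, ?_⟩
      · simp [← hg_fst, hr]
      · ext i <;> simp [φ]
    · rintro ⟨p, hp, rfl⟩
      refine Subtype.ext (TrivSqZeroExt.ext ?_ (hg_snd _))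
      rw [hg_fst]
      simp [φ, hp]
  have hfg : ((LinearMap.ker g).restrictScalars A).FG := by
    rw [hker]
    exact (hL.prod Module.Finite.fg_top).map φ
  exact Submodule.FG.of_restrictScalars A hfg
end

section
/- Let A be a commutative ring, M an ideal of A, and E an A-module with ME = 0. In the trivial ring extension R := A ⋉ E, the ideal M ⋉ E := {(m, f) : m ∈ M, f ∈ E} is finitely generated as an ideal of R if and only if M is a finitely generated ideal of A and E is a finitely generated A-module. -/
/-!
Since `M` annihilates `E`, an element `r` of `A ⋉ E` acts on `M ⋉ E` through its first component:
`(a, e) * (m, f) = (a * m, a • f)`. Hence the second components of ring generators of `M ⋉ E`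
already span `E` over `A`, while their first components generate `M`, the image of `M ⋉ E` under the
projection onto `A`. Conversely, as an `A`-module `M ⋉ E` is the sum of the images of `M` and `E`, so
it is finitely generated over `A`, and a fortiori over `A ⋉ E`.
-/

theorem trivSqZeroExt_ideal_fg_iff (A E : Type*) [CommRing A]
    [AddCommGroup E] [Module A E] [Module Aᵐᵒᵖ E] [IsCentralScalar A E]
    (M : Ideal A) (hME : ∀ a ∈ M, ∀ e : E, a • e = 0)
    (K : Ideal (TrivSqZeroExt A E))
    (hK : ∀ x : TrivSqZeroExt A E, x ∈ K ↔ x.fst ∈ M) :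
    K.FG ↔ M.FG ∧ Module.Finite A E := by
  classical
  constructor
  · intro h
    constructor
    · have hM : K.map (TrivSqZeroExt.fstHom A A E) = M := by
        apply le_antisymm
        · rw [Ideal.map_le_iff_le_comap]
          exact fun x hx => (hK x).1 hx
        · intro m hm
          exact Ideal.mem_map_of_mem (TrivSqZeroExt.fstHom A A E)
            ((hK (TrivSqZeroExt.inl m)).2 hm)
      rw [← hM]
      exact Ideal.FG.map h _
    · obtain ⟨S, hS⟩ := h
      have key : ∀ x ∈ Submodule.span (TrivSqZeroExt A E) (S : Set (TrivSqZeroExt A E)),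
          x.snd ∈ Submodule.span A ((S.image TrivSqZeroExt.snd : Finset E) : Set E) := by
        intro x hx
        induction hx using Submodule.span_induction with
        | mem x hx => exact Submodule.subset_span (Finset.mem_image_of_mem _ hx)
        | zero => exact Submodule.zero_mem _
        | add x y _ _ hx hy => exact Submodule.add_mem _ hx hy
        | smul r x hx ih =>
          -- `x` lies in `K`, so its first component kills the second component of `r`.
          have hxM : x.fst ∈ M := (hK x).1 (hS ▸ hx)
          rw [smul_eq_mul, TrivSqZeroExt.snd_mul, op_smul_eq_smul, hME _ hxM, add_zero]
          exact Submodule.smul_mem _ _ ih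
      refine ⟨⟨S.image TrivSqZeroExt.snd, eq_top_iff.2 fun e _ => ?_⟩⟩
      refine key (TrivSqZeroExt.inr e) ?_
      change TrivSqZeroExt.inr e ∈ Ideal.span (S : Set (TrivSqZeroExt A E))
      rw [hS]
      exact (hK _).2 M.zero_mem
  · rintro ⟨hM, hE⟩
    have hsum : K.restrictScalars A =
        Submodule.map (TrivSqZeroExt.inlAlgHom A A E).toLinearMap M ⊔
          Submodule.map (TrivSqZeroExt.inrHom A E) ⊤ := by
      apply le_antisymm
      · intro x hx
        rw [← TrivSqZeroExt.inl_fst_add_inr_snd_eq x]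
        exact Submodule.add_mem_sup ⟨x.fst, (hK x).1 hx, rfl⟩ ⟨x.snd, trivial, rfl⟩
      · refine sup_le ?_ ?_
        · rintro _ ⟨m, hm, rfl⟩
          exact (hK _).2 hm
        · rintro _ ⟨e, -, rfl⟩
          exact (hK _).2 M.zero_mem
    refine Submodule.FG.of_restrictScalars A ?_
    rw [hsum]
    exact (Submodule.FG.map _ hM).sup (Submodule.FG.map _ hE.fg_top)
end
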